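/- arXiv:1404.1765 — 3 statements merged into one kernel-verified Lean document; each statement's English description precedes it below -/
import Mathlib

section
/- Let x ∈ Ω and set σ := (2/3)·∫_{ℝ³} k(‖z‖²)·‖z‖² dz. Then, as m → ∞ along the natural numbers, ∫_Ω m⁵·k(‖m·(x−y)‖²)·(φ(x)−φ(y))² dy converges to (σ/2)·‖∇φ(x)‖², where ∇φ(x) denotes the gradient of φ at x. -/
open MeasureTheory Filter

lemma iso_aux (k : ℝ → ℝ) (v w : EuclideanSpace ℝ (Fin 3)) (h : ‖v‖ = ‖w‖) :
    ∫ z : EuclideanSpace ℝ (Fin 3), k (‖z‖ ^ 2) * (inner ℝ v z) ^ 2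
      = ∫ z : EuclideanSpace ℝ (Fin 3), k (‖z‖ ^ 2) * (inner ℝ w z) ^ 2 := by
  set R := (Submodule.span ℝ {v - w})ᗮ.reflection with hR
  have hv : R v = w := Submodule.reflection_sub h
  have := R.measurePreserving.integral_comp R.toMeasurableEquiv.measurableEmbedding
    (fun z : EuclideanSpace ℝ (Fin 3) => k (‖z‖ ^ 2) * (inner ℝ w z) ^ 2)
  rw [← this]
  congr 1
  ext z
  have h2 : inner ℝ w (R z) = inner ℝ v z := by rw [← hv]; exact R.inner_map_map v z
  simp only [h2, LinearIsometryEquiv.norm_map]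

lemma int_aux (k : ℝ → ℝ) (hkmeas : Measurable k) (hknonneg : ∀ t, 0 ≤ k t)
    (M : ℝ) (hkbdd : ∀ t, k t ≤ M) (hksupp : ∀ t : ℝ, 1 < t → k t = 0)
    (v : EuclideanSpace ℝ (Fin 3)) :
    Integrable (fun z : EuclideanSpace ℝ (Fin 3) => k (‖z‖ ^ 2) * (inner ℝ v z) ^ 2) := by
  have hb : Integrable (Set.indicator (Metric.closedBall (0 : EuclideanSpace ℝ (Fin 3)) 1)
      (fun _ => M * ‖v‖ ^ 2)) :=
    (integrable_indicator_iff measurableSet_closedBall).2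
      (integrableOn_const (isCompact_closedBall _ _).measure_lt_top.ne)
  refine hb.mono' (by fun_prop) (ae_of_all _ fun z => ?_)
  rw [Real.norm_of_nonneg (mul_nonneg (hknonneg _) (sq_nonneg _))]
  by_cases hz : ‖z‖ ≤ 1
  · rw [Set.indicator_of_mem (by simpa using hz)]
    have h1 : (inner ℝ v z) ^ 2 ≤ ‖v‖ ^ 2 := by
      rw [← sq_abs]
      have := abs_real_inner_le_norm v z
      have : |inner ℝ v z| ≤ ‖v‖ := this.trans (mul_le_of_le_one_right (norm_nonneg _) hz)
      gcongr
    exact mul_le_mul (hkbdd _) h1 (sq_nonneg _) ((hknonneg 0).trans (hkbdd 0))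
  · rw [Set.indicator_of_notMem (by simpa using hz), hksupp _ (by nlinarith)]
    simp

lemma avg_aux (k : ℝ → ℝ) (hkmeas : Measurable k) (hknonneg : ∀ t, 0 ≤ k t)
    (M : ℝ) (hkbdd : ∀ t, k t ≤ M) (hksupp : ∀ t : ℝ, 1 < t → k t = 0)
    (v : EuclideanSpace ℝ (Fin 3)) :
    3 * ∫ z : EuclideanSpace ℝ (Fin 3), k (‖z‖ ^ 2) * (inner ℝ v z) ^ 2
      = ‖v‖ ^ 2 * ∫ z : EuclideanSpace ℝ (Fin 3), k (‖z‖ ^ 2) * ‖z‖ ^ 2 := by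
  have h1 : ∀ i : Fin 3, ∫ z : EuclideanSpace ℝ (Fin 3), k (‖z‖ ^ 2) * (inner ℝ v z) ^ 2 =
      ∫ z : EuclideanSpace ℝ (Fin 3), k (‖z‖ ^ 2) *
        (inner ℝ (EuclideanSpace.single i ‖v‖) z) ^ 2 := fun i => iso_aux k _ _ (by simp)
  have h2 : 3 * ∫ z : EuclideanSpace ℝ (Fin 3), k (‖z‖ ^ 2) * (inner ℝ v z) ^ 2 =
      ∑ i : Fin 3, ∫ z : EuclideanSpace ℝ (Fin 3), k (‖z‖ ^ 2) *
        (inner ℝ (EuclideanSpace.single i ‖v‖) z) ^ 2 := by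
    rw [← Finset.sum_congr rfl (fun i _ => h1 i)]; simp
  rw [h2, ← integral_finsetSum _ (fun i _ => int_aux k hkmeas hknonneg M hkbdd hksupp _),
    ← integral_const_mul]
  congr 1
  ext z
  rw [← Finset.mul_sum, EuclideanSpace.real_norm_sq_eq z]
  simp only [EuclideanSpace.inner_single_left, Fin.sum_univ_three]
  simp
  ring

/-- with `σ = (2/3)·∫_{ℝ³} k(‖z‖²)·‖z‖² dz`, as `m → ∞`,
`∫_Ω m⁵·k(‖m(x−y)‖²)·(φ(x)−φ(y))² dy → (σ/2)·‖∇φ(x)‖²`. -/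
theorem stmt3 (Ω : Set (EuclideanSpace ℝ (Fin 3))) (hΩopen : IsOpen Ω)
    (hΩbdd : Bornology.IsBounded Ω)
    (k : ℝ → ℝ) (hkmeas : Measurable k) (hknonneg : ∀ t, 0 ≤ k t)
    (M : ℝ) (hkbdd : ∀ t, k t ≤ M) (hksupp : ∀ t : ℝ, 1 < t → k t = 0)
    (φ : EuclideanSpace ℝ (Fin 3) → ℝ) (L : NNReal) (hφlip : LipschitzWith L φ)
    (x : EuclideanSpace ℝ (Fin 3)) (hx : x ∈ Ω) (hφdiff : DifferentiableAt ℝ φ x)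
    (σ : ℝ)
    (hσ : σ = (2 / 3) * ∫ z : EuclideanSpace ℝ (Fin 3), k (‖z‖ ^ 2) * ‖z‖ ^ 2) :
    Tendsto
      (fun m : ℕ => ∫ y in Ω, (m : ℝ) ^ 5 * k (‖(m : ℝ) • (x - y)‖ ^ 2) * (φ x - φ y) ^ 2)
      atTop (nhds ((σ / 2) * ‖gradient φ x‖ ^ 2)) := by
  have hlim : (σ / 2) * ‖gradient φ x‖ ^ 2 =
      ∫ z : EuclideanSpace ℝ (Fin 3), k (‖z‖ ^ 2) * (inner ℝ (gradient φ x) z) ^ 2 := by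
    have := avg_aux k hkmeas hknonneg M hkbdd hksupp (gradient φ x)
    rw [hσ]; linarith
  rw [hlim]
  have hφc : Continuous φ := hφlip.continuous
  have hsub : ∀ᶠ m : ℕ in atTop,
      ∫ z : EuclideanSpace ℝ (Fin 3), Ω.indicator (fun _ => (1 : ℝ)) (x + (m : ℝ)⁻¹ • z) *
        (k (‖z‖ ^ 2) * ((m : ℝ) • (φ (x + (m : ℝ)⁻¹ • z) - φ x)) ^ 2)
      = ∫ y in Ω, (m : ℝ) ^ 5 * k (‖(m : ℝ) • (x - y)‖ ^ 2) * (φ x - φ y) ^ 2 := by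
    filter_upwards [eventually_gt_atTop 0] with m hm
    have hm0 : (m : ℝ) ≠ 0 := by positivity
    rw [← integral_indicator hΩopen.measurableSet]
    set F : EuclideanSpace ℝ (Fin 3) → ℝ := Ω.indicator
      (fun y => (m : ℝ) ^ 5 * k (‖(m : ℝ) • (x - y)‖ ^ 2) * (φ x - φ y) ^ 2) with hF
    have e1 : ∫ y, F y = ∫ y, F (x + y) := (integral_add_left_eq_self F x).symm
    have e2 := Measure.integral_comp_smul volume (fun y => F (x + y)) ((m : ℝ)⁻¹)
    have e3 : ∫ y, F (x + y) = ((m : ℝ) ^ 3)⁻¹ * ∫ z, F (x + (m : ℝ)⁻¹ • z) := by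
      rw [e2, finrank_euclideanSpace_fin, inv_pow, inv_inv, abs_of_nonneg (by positivity),
        smul_eq_mul, ← mul_assoc, inv_mul_cancel₀ (by positivity), one_mul]
    rw [e1, e3, ← integral_const_mul]
    congr 1
    ext z
    by_cases hz : x + (m : ℝ)⁻¹ • z ∈ Ω
    · rw [hF, Set.indicator_of_mem hz, Set.indicator_of_mem hz]
      have : ‖(m : ℝ) • (x - (x + (m : ℝ)⁻¹ • z))‖ = ‖z‖ := by
        rw [sub_add_cancel_left, smul_neg, smul_inv_smul₀ hm0, norm_neg]
      rw [this, smul_eq_mul]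
      field_simp
      ring
    · rw [hF, Set.indicator_of_notMem hz, Set.indicator_of_notMem hz]; simp
  refine Tendsto.congr' hsub ?_
  have hM : 0 ≤ M := (hknonneg 0).trans (hkbdd 0)
  refine tendsto_integral_filter_of_dominated_convergence
    (Set.indicator (Metric.closedBall (0 : EuclideanSpace ℝ (Fin 3)) 1)
      (fun _ => M * (L : ℝ) ^ 2)) ?_ ?_ ?_ ?_
  · refine Eventually.of_forall fun m => Measurable.aestronglyMeasurable ?_
    have h1 : Measurable (Ω.indicator (fun _ => (1 : ℝ))) :=
      measurable_const.indicator hΩopen.measurableSet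
    have h2 : Measurable φ := hφc.measurable
    have h3 : Measurable (fun z : EuclideanSpace ℝ (Fin 3) => x + (m : ℝ)⁻¹ • z) := by fun_prop
    exact (h1.comp h3).mul ((hkmeas.comp (by fun_prop)).mul
      ((((h2.comp h3).sub_const (φ x)).const_mul (m : ℝ)).pow_const 2))
  · filter_upwards [eventually_gt_atTop 0] with m hm
    have hm0 : (m : ℝ) ≠ 0 := by positivity
    refine ae_of_all _ fun z => ?_
    have hnn := mul_nonneg (hknonneg (‖z‖ ^ 2))
      (sq_nonneg ((m : ℝ) • (φ (x + (m : ℝ)⁻¹ • z) - φ x)))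
    rw [norm_mul, Real.norm_of_nonneg hnn]
    have hi : ‖Ω.indicator (fun _ => (1 : ℝ)) (x + (m : ℝ)⁻¹ • z)‖ ≤ 1 := by
      refine (norm_indicator_le_norm_self _ _).trans (by simp)
    refine (mul_le_of_le_one_left hnn hi).trans ?_
    by_cases hz : ‖z‖ ≤ 1
    · rw [Set.indicator_of_mem (by simpa using hz)]
      refine mul_le_mul (hkbdd _) ?_ (sq_nonneg _) hM
      rw [← sq_abs]
      have h1 : ‖φ (x + (m : ℝ)⁻¹ • z) - φ x‖ ≤ L * ‖x + (m : ℝ)⁻¹ • z - x‖ :=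
        hφlip.norm_sub_le _ _
      rw [add_sub_cancel_left, norm_smul, norm_inv, Real.norm_natCast] at h1
      have h2 : |(m : ℝ) • (φ (x + (m : ℝ)⁻¹ • z) - φ x)| ≤ L := by
        rw [smul_eq_mul, abs_mul, Nat.abs_cast]
        calc (m : ℝ) * |φ (x + (m : ℝ)⁻¹ • z) - φ x| ≤ m * (L * ((m : ℝ)⁻¹ * ‖z‖)) := by
              gcongr; exact h1
          _ = L * ‖z‖ := by field_simp
          _ ≤ L := mul_le_of_le_one_right L.2 hz
      gcongr
    · rw [Set.indicator_of_notMem (by simpa using hz), hksupp _ (by nlinarith)]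
      simp
  · exact (integrable_indicator_iff measurableSet_closedBall).2
      (integrableOn_const (isCompact_closedBall _ _).measure_lt_top.ne)
  · refine ae_of_all _ fun z => ?_
    have hc : Tendsto (fun m : ℕ => ‖(m : ℝ)‖) atTop atTop := by
      simpa using tendsto_natCast_atTop_atTop (R := ℝ)
    have hd := hφdiff.hasGradientAt.hasFDerivAt.lim z hc
    rw [InnerProductSpace.toDual_apply_apply] at hd
    have hin : ∀ᶠ m : ℕ in atTop, x + (m : ℝ)⁻¹ • z ∈ Ω := by
      have : Tendsto (fun m : ℕ => x + (m : ℝ)⁻¹ • z) atTop (nhds (x + (0 : ℝ) • z)) :=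
        (tendsto_inv_atTop_nhds_zero_nat.smul_const z).const_add x
      rw [zero_smul, add_zero] at this
      exact this (hΩopen.mem_nhds hx)
    refine ((hd.pow 2).const_mul (k (‖z‖ ^ 2))).congr' ?_
    filter_upwards [hin] with m hm
    rw [Set.indicator_of_mem hm, one_mul]
end

section
/- There exists a constant C > 0 such that for every continuously differentiable function v : ℝ³ → ℝ with compact support, the Gagliardo–Nirenberg interpolation inequality ‖v‖_{L³(ℝ³)} ≤ C·‖v‖_{L²(ℝ³)}^{1/2}·‖Dv‖_{L²(ℝ³)}^{1/2} holds, where Dv denotes the (Fréchet) derivative of v and ‖Dv‖_{L²(ℝ³)} is the L² norm of x ↦ ‖Dv(x)‖. -/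
open MeasureTheory

/-- Gagliardo–Nirenberg: there is `C > 0` such that for every `C¹`
compactly supported `v : ℝ³ → ℝ`,
`‖v‖_{L³} ≤ C·‖v‖_{L²}^{1/2}·‖Dv‖_{L²}^{1/2}`. -/
theorem stmt12 :
    ∃ C : ℝ, 0 < C ∧
      ∀ v : EuclideanSpace ℝ (Fin 3) → ℝ, ContDiff ℝ 1 v → HasCompactSupport v →
        (∫ x : EuclideanSpace ℝ (Fin 3), |v x| ^ (3 : ℝ)) ^ ((1 : ℝ) / 3)
          ≤ C * ((∫ x : EuclideanSpace ℝ (Fin 3), |v x| ^ (2 : ℝ)) ^ ((1 : ℝ) / 2)) ^ ((1 : ℝ) / 2)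
              * ((∫ x : EuclideanSpace ℝ (Fin 3), ‖fderiv ℝ v x‖ ^ (2 : ℝ)) ^ ((1 : ℝ) / 2)) ^ ((1 : ℝ) / 2) := by
  let K : NNReal := eLpNormLESNormFDerivOfEqInnerConst
    (volume : Measure (EuclideanSpace ℝ (Fin 3))) 2
  refine ⟨((K : ℝ) + 1) ^ ((1 : ℝ) / 2), by positivity, ?_⟩
  intro v hv hs
  have hsob := eLpNorm_le_eLpNorm_fderiv_of_eq_inner
    (volume : Measure (EuclideanSpace ℝ (Fin 3))) hv hs (p := 2) (p' := 6)
    (by norm_num) (by simp) (by simp; norm_num)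
  have hvc : Continuous v := hv.continuous
  have hdc : Continuous (fderiv ℝ v) := hv.continuous_fderiv one_ne_zero
  have m6 : MemLp v (6 : NNReal) volume := hvc.memLp_of_hasCompactSupport hs
  have md : MemLp (fderiv ℝ v) (2 : NNReal) volume :=
    hdc.memLp_of_hasCompactSupport (hs.fderiv ℝ)
  rw [m6.eLpNorm_eq_integral_rpow_norm (by simp) (by simp),
    md.eLpNorm_eq_integral_rpow_norm (by simp) (by simp)] at hsob
  simp only [ENNReal.coe_toReal, NNReal.coe_ofNat, Real.norm_eq_abs] at hsob
  have hA : 0 ≤ ∫ x, |v x| ^ (2 : ℝ) := integral_nonneg fun x => by positivity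
  have hB : 0 ≤ ∫ x, |v x| ^ (6 : ℝ) := integral_nonneg fun x => by positivity
  have hD : 0 ≤ ∫ x, ‖fderiv ℝ v x‖ ^ (2 : ℝ) := integral_nonneg fun x => by positivity
  have h3 : 0 ≤ ∫ x, |v x| ^ (3 : ℝ) := integral_nonneg fun x => by positivity
  have hsob' : (∫ x, |v x| ^ (6 : ℝ)) ^ ((6 : ℝ)⁻¹) ≤
      K * (∫ x, ‖fderiv ℝ v x‖ ^ (2 : ℝ)) ^ ((2 : ℝ)⁻¹) := by
    rw [← ENNReal.ofReal_coe_nnreal, ← ENNReal.ofReal_mul (by positivity)] at hsob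
    exact (ENNReal.ofReal_le_ofReal_iff (by positivity)).1 hsob
  let f : EuclideanSpace ℝ (Fin 3) → ℝ := fun x => |v x| ^ ((3 : ℝ) / 2)
  have hfc : Continuous f := hvc.abs.rpow_const fun x => Or.inr (by norm_num)
  have hfs : HasCompactSupport f :=
    hs.comp_left (g := fun t : ℝ => |t| ^ ((3 : ℝ) / 2)) (by simp)
  have hol := integral_mul_le_Lp_mul_Lq_of_nonneg
    (μ := (volume : Measure (EuclideanSpace ℝ (Fin 3)))) (p := 4 / 3) (q := 4) (f := f) (g := f)
    ⟨by norm_num, by norm_num, by norm_num⟩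
    (Filter.Eventually.of_forall fun x => by positivity)
    (Filter.Eventually.of_forall fun x => by positivity)
    (hfc.memLp_of_hasCompactSupport hfs) (hfc.memLp_of_hasCompactSupport hfs)
  have e1 : ∀ x, f x * f x = |v x| ^ (3 : ℝ) := fun x => by
    simp only [f]
    rw [← Real.rpow_add_of_nonneg (abs_nonneg _) (by norm_num) (by norm_num)]; norm_num
  have e2 : ∀ x, f x ^ ((4 : ℝ) / 3) = |v x| ^ (2 : ℝ) := fun x => by
    simp only [f]
    rw [← Real.rpow_mul (abs_nonneg _)]; norm_num
  have e3 : ∀ x, f x ^ (4 : ℝ) = |v x| ^ (6 : ℝ) := fun x => by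
    simp only [f]
    rw [← Real.rpow_mul (abs_nonneg _)]; norm_num
  simp only [e1, e2, e3] at hol
  generalize (∫ x, |v x| ^ (2 : ℝ)) = A at *
  generalize (∫ x, |v x| ^ (6 : ℝ)) = B at *
  generalize (∫ x, |v x| ^ (3 : ℝ)) = T at *
  generalize (∫ x, ‖fderiv ℝ v x‖ ^ (2 : ℝ)) = D at *
  have hK : (0 : ℝ) ≤ K := K.2
  calc T ^ ((1 : ℝ) / 3)
      ≤ (A ^ ((1 : ℝ) / (4 / 3)) * B ^ ((1 : ℝ) / 4)) ^ ((1 : ℝ) / 3) := by gcongr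
    _ = (A ^ ((1 : ℝ) / 2)) ^ ((1 : ℝ) / 2) * (B ^ ((6 : ℝ)⁻¹)) ^ ((1 : ℝ) / 2) := by
        rw [Real.mul_rpow (by positivity) (by positivity)]
        simp only [← Real.rpow_mul hA, ← Real.rpow_mul hB]
        norm_num
    _ ≤ (A ^ ((1 : ℝ) / 2)) ^ ((1 : ℝ) / 2) *
          (((K : ℝ) + 1) * D ^ ((1 : ℝ) / 2)) ^ ((1 : ℝ) / 2) := by
        gcongr
        refine le_trans hsob' ?_
        rw [← one_div]
        gcongr
        linarith
    _ = _ := by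
        rw [Real.mul_rpow (by positivity) (by positivity)]
        ring
end

section
/- There exists a constant C > 0 such that for every continuously differentiable function v : ℝ³ → ℝ with compact support, the Gagliardo–Nirenberg interpolation inequality ‖v‖_{L⁴(ℝ³)} ≤ C·‖v‖_{L²(ℝ³)}^{1/4}·‖Dv‖_{L²(ℝ³)}^{3/4} holds, where Dv denotes the (Fréchet) derivative of v and ‖Dv‖_{L²(ℝ³)} is the L² norm of x ↦ ‖Dv(x)‖. -/
open MeasureTheory

lemma stmt13_sobolev :
    ∃ K : ℝ, 0 < K ∧
      ∀ v : EuclideanSpace ℝ (Fin 3) → ℝ, ContDiff ℝ 1 v → HasCompactSupport v →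
        (∫ x : EuclideanSpace ℝ (Fin 3), |v x| ^ (6 : ℝ)) ^ ((1 : ℝ) / 6)
          ≤ K * (∫ x : EuclideanSpace ℝ (Fin 3), ‖fderiv ℝ v x‖ ^ (2 : ℝ)) ^ ((1 : ℝ) / 2) := by
  refine ⟨(eLpNormLESNormFDerivOfEqInnerConst
    (volume : Measure (EuclideanSpace ℝ (Fin 3))) ((2 : NNReal) : ℝ) : ℝ) + 1, by positivity, ?_⟩
  intro v hv hc
  have h := eLpNorm_le_eLpNorm_fderiv_of_eq_inner
    (volume : Measure (EuclideanSpace ℝ (Fin 3))) hv hc (p := 2) (p' := 6)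
    (by norm_num) (by simp) (by simp; norm_num)
  have m6 : MemLp v ((6 : NNReal) : ENNReal) volume := hv.continuous.memLp_of_hasCompactSupport hc
  have m2 : MemLp (fderiv ℝ v) ((2 : NNReal) : ENNReal) volume :=
    (hv.continuous_fderiv (by norm_num)).memLp_of_hasCompactSupport (hc.fderiv ℝ)
  rw [m6.eLpNorm_eq_integral_rpow_norm (by simp) (by simp),
    m2.eLpNorm_eq_integral_rpow_norm (by simp) (by simp),
    ← ENNReal.ofReal_coe_nnreal (p := eLpNormLESNormFDerivOfEqInnerConst _ _), ← ENNReal.ofReal_mul (by positivity),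
    ENNReal.ofReal_le_ofReal_iff (by positivity)] at h
  simp only [ENNReal.coe_toReal, NNReal.coe_ofNat, Real.norm_eq_abs] at h
  rw [one_div, one_div]
  refine h.trans ?_
  gcongr
  simp

theorem stmt13 :
    ∃ C : ℝ, 0 < C ∧
      ∀ v : EuclideanSpace ℝ (Fin 3) → ℝ, ContDiff ℝ 1 v → HasCompactSupport v →
        (∫ x : EuclideanSpace ℝ (Fin 3), |v x| ^ (4 : ℝ)) ^ ((1 : ℝ) / 4)
          ≤ C * ((∫ x : EuclideanSpace ℝ (Fin 3), |v x| ^ (2 : ℝ)) ^ ((1 : ℝ) / 2)) ^ ((1 : ℝ) / 4)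
              * ((∫ x : EuclideanSpace ℝ (Fin 3), ‖fderiv ℝ v x‖ ^ (2 : ℝ)) ^ ((1 : ℝ) / 2)) ^ ((3 : ℝ) / 4) := by
  obtain ⟨K, hK, hS⟩ := stmt13_sobolev
  refine ⟨K ^ ((3 : ℝ) / 4), by positivity, ?_⟩
  intro v hv hc
  have h1 := hS v hv hc
  have hca : Continuous (fun x => |v x|) := hv.continuous.abs
  have hcs : HasCompactSupport (fun x => |v x|) := hc.comp_left (g := fun t : ℝ => |t|) abs_zero
  have ma : MemLp (fun x => |v x|) (ENNReal.ofReal 2) volume :=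
    hca.memLp_of_hasCompactSupport hcs
  have mb : MemLp (fun x => |v x| ^ (3 : ℝ)) (ENNReal.ofReal 2) volume :=
    (hca.rpow_const (fun _ => Or.inr (by norm_num))).memLp_of_hasCompactSupport
      (hcs.comp_left (g := fun t : ℝ => t ^ (3 : ℝ)) (by norm_num))
  have h2 := integral_mul_le_Lp_mul_Lq_of_nonneg (μ := volume) (p := 2) (q := 2)
    (by constructor <;> norm_num)
    (Filter.Eventually.of_forall (fun x => abs_nonneg (v x)))
    (Filter.Eventually.of_forall (fun x => by positivity)) ma mb
  have e1 : ∀ x, |v x| * |v x| ^ (3 : ℝ) = |v x| ^ (4 : ℝ) := fun x => by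
    norm_cast; ring
  have e2 : ∀ x, (|v x| ^ (3 : ℝ)) ^ (2 : ℝ) = |v x| ^ (6 : ℝ) := fun x => by
    rw [← Real.rpow_mul (abs_nonneg _)]; norm_num
  simp only [e1, e2] at h2
  have hA : 0 ≤ ∫ x, |v x| ^ (2 : ℝ) := integral_nonneg fun x => by positivity
  have hB : 0 ≤ ∫ x, |v x| ^ (6 : ℝ) := integral_nonneg fun x => by positivity
  have hF : 0 ≤ ∫ x, |v x| ^ (4 : ℝ) := integral_nonneg fun x => by positivity
  have hD : 0 ≤ ∫ x, ‖fderiv ℝ v x‖ ^ (2 : ℝ) := integral_nonneg fun x => by positivity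
  generalize (∫ x, |v x| ^ (2 : ℝ)) = A at *
  generalize (∫ x, |v x| ^ (6 : ℝ)) = B at *
  generalize (∫ x, |v x| ^ (4 : ℝ)) = F at *
  generalize (∫ x, ‖fderiv ℝ v x‖ ^ (2 : ℝ)) = D at *
  calc F ^ ((1 : ℝ) / 4) ≤ (A ^ ((1 : ℝ) / 2) * B ^ ((1 : ℝ) / 2)) ^ ((1 : ℝ) / 4) := by gcongr
    _ = (A ^ ((1 : ℝ) / 2)) ^ ((1 : ℝ) / 4) * (B ^ ((1 : ℝ) / 6)) ^ ((3 : ℝ) / 4) := by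
      rw [Real.mul_rpow (by positivity) (by positivity), ← Real.rpow_mul hB, ← Real.rpow_mul hB]
      norm_num
    _ ≤ (A ^ ((1 : ℝ) / 2)) ^ ((1 : ℝ) / 4) * (K * D ^ ((1 : ℝ) / 2)) ^ ((3 : ℝ) / 4) := by gcongr
    _ = _ := by
      rw [Real.mul_rpow (by positivity) (by positivity)]; ring
end
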